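/- (Newtonian mechanics as a Finsler system.) Let n ≥ 1, m > 0, and let V : ℝⁿ → ℝ be C¹. Define F on (ℝ × ℝⁿ) × (ℝ × ℝⁿ), writing x = (x⁰, x⃗), y = (y⁰, y⃗), by F(x, y) := (m/2)·‖y⃗‖²/y⁰ − V(x⃗)·y⁰ (for y⁰ ≠ 0; the value at y⁰ = 0 is irrelevant). Then: (a) F is positively homogeneous of degree 1 in y on the region y⁰ ≠ 0, i.e. F(x, λ • y) = λ·F(x, y) for all λ > 0 and y⁰ ≠ 0; and (b) for every C² map q : ℝ → ℝⁿ and t₁ < t₂, the curve σ(t) := (t, q(t)) satisfies the Euler–Lagrange equations of F on [t₁, t₂] (all n + 1 components of the Euler–Lagrange covector E(t) vanish) if and only if m·q″(t) = −∇V(q(t)) for all t ∈ [t₁, t₂], i.e. m·⟨q″(t), w⟩ = −DV(q(t))(w) for all w ∈ ℝⁿ. -/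

import Mathlib

open scoped RealInnerProductSpace

/-- The Euler–Lagrange covector of a Lagrangian `F` on `(ℝ × ℝⁿ) × (ℝ × ℝⁿ)` along a curve
`σ : ℝ → ℝ × ℝⁿ`, evaluated at time `t` on the test vector `h`. -/
noncomputable def eulerLagrange (n : ℕ)
    (F : (ℝ × EuclideanSpace ℝ (Fin n)) × (ℝ × EuclideanSpace ℝ (Fin n)) → ℝ)
    (σ : ℝ → ℝ × EuclideanSpace ℝ (Fin n)) (t : ℝ) (h : ℝ × EuclideanSpace ℝ (Fin n)) : ℝ :=
  (fderiv ℝ (fun x => fderiv ℝ (fun y => F (x, y)) (deriv σ t)) (σ t)) h (deriv σ t)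
    - deriv (fun s => fderiv ℝ (fun y => F (σ s, y)) (deriv σ s) h) t

/-! `F` is the homogenization `y⁰ L(x⃗, y⃗/y⁰)` of `L(x⃗, v) = (m/2)‖v‖² − V(x⃗)`. Homogeneity makes
its Euler–Lagrange covector vanish on the velocity `σ' = (1, q')`, so along a graph the covector
sees a test vector `h` only through `h − h⁰ σ' = (0, h⃗ − h⁰ q')`, and on such spatial vectors it is
the Newton covector `w ↦ −(m⟪q'', w⟫ + DV(q) w)`. -/

open scoped Topology

section EulerLagrangeCovector

variable {X : Type*} [NormedAddCommGroup X] [NormedSpace ℝ X]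

/-- The Euler–Lagrange covector of a Lagrangian on `X × X` along a curve in a real normed space `X`.
It extends `eulerLagrange`, which is the case `X = ℝ × ℝⁿ`, to spaces of any dimension. -/
noncomputable def eulerLagrangeCovector (F : X × X → ℝ) (σ : ℝ → X) (t : ℝ) (h : X) : ℝ :=
  fderiv ℝ (fun x => fderiv ℝ (fun y => F (x, y)) (deriv σ t)) (σ t) h (deriv σ t)
    - deriv (fun s => fderiv ℝ (fun y => F (σ s, y)) (deriv σ s) h) t

end EulerLagrangeCovector

section NewtonFinsler

variable {E : Type*} [NormedAddCommGroup E] [InnerProductSpace ℝ E]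
  {m t : ℝ} {V : E → ℝ} {V' : E →L[ℝ] ℝ} {F : (ℝ × E) × (ℝ × E) → ℝ}
  {q q' : ℝ → E} {q'' : E} {x y : ℝ × E}

/-- The homogenized Lagrangian of a particle of mass `m` in the potential `V`, on the space-time
`ℝ × E`. Its value at `y.1 = 0` is a junk value. -/
noncomputable def newtonFinsler (m : ℝ) (V : E → ℝ) (x y : ℝ × E) : ℝ :=
  m / 2 * ‖y.2‖ ^ 2 / y.1 - V x.2 * y.1

/-- The momentum covector of `newtonFinsler`, that is, its derivative in the velocity `y` (for
`y.1 ≠ 0`): the spatial part is the linear momentum, the time part is minus the energy. -/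
noncomputable def newtonMomentum (m : ℝ) (V : E → ℝ) (x y : ℝ × E) : ℝ × E →L[ℝ] ℝ :=
  (m / y.1) • (innerSL ℝ y.2).comp (ContinuousLinearMap.snd ℝ ℝ E)
    - (m / 2 * (‖y.2‖ / y.1) ^ 2 + V x.2) • ContinuousLinearMap.fst ℝ ℝ E

theorem newtonMomentum_apply (m : ℝ) (V : E → ℝ) (x y h : ℝ × E) :
    newtonMomentum m V x y h =
      m / y.1 * ⟪y.2, h.2⟫ - (m / 2 * (‖y.2‖ / y.1) ^ 2 + V x.2) * h.1 :=
  rfl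

theorem newtonFinsler_smul (m : ℝ) (V : E → ℝ) (x : ℝ × E) {l : ℝ} (hl : l ≠ 0) (hy : y.1 ≠ 0) :
    newtonFinsler m V x (l • y) = l * newtonFinsler m V x y := by
  simp only [newtonFinsler, Prod.smul_fst, Prod.smul_snd, norm_smul, smul_eq_mul, mul_pow,
    Real.norm_eq_abs, sq_abs]
  field_simp

theorem hasFDerivAt_newtonFinsler (m : ℝ) (V : E → ℝ) (x : ℝ × E) (hy : y.1 ≠ 0) :
    HasFDerivAt (newtonFinsler m V x) (newtonMomentum m V x y) y := by
  have h_time : HasFDerivAt Prod.fst (ContinuousLinearMap.fst ℝ ℝ E) y := hasFDerivAt_fst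
  have h_space : HasFDerivAt Prod.snd (ContinuousLinearMap.snd ℝ ℝ E) y := hasFDerivAt_snd
  have h_kinetic : HasFDerivAt (fun z : ℝ × E => m / 2 * ‖z.2‖ ^ 2 / z.1) _ y :=
    (h_space.norm_sq.const_mul (m / 2)).mul ((hasDerivAt_inv hy).comp_hasFDerivAt y h_time)
  refine (h_kinetic.fun_sub (h_time.const_mul (V x.2))).congr_fderiv ?_
  refine ContinuousLinearMap.ext fun h => ?_
  simp only [newtonMomentum_apply, neg_smul, smul_neg, sub_apply, add_apply, neg_apply, smul_apply,
    ContinuousLinearMap.coe_fst', ContinuousLinearMap.coe_snd', ContinuousLinearMap.comp_apply,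
    coe_innerSL_apply, smul_eq_mul, nsmul_eq_mul, Nat.cast_ofNat]
  field_simp
  ring

theorem fderiv_eq_newtonMomentum
    (hF : ∀ x y : ℝ × E, y.1 ≠ 0 → F (x, y) = newtonFinsler m V x y) (hy : y.1 ≠ 0) :
    fderiv ℝ (fun z => F (x, z)) y = newtonMomentum m V x y := by
  have h_eq : (fun z => F (x, z)) =ᶠ[𝓝 y] newtonFinsler m V x :=
    (continuous_fst.continuousAt.eventually_ne hy).mono fun z hz => hF x z hz
  exact ((hasFDerivAt_newtonFinsler m V x hy).congr_of_eventuallyEq h_eq).fderiv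

set_option maxSynthPendingDepth 3 in
theorem hasFDerivAt_newtonMomentum (m : ℝ) (y : ℝ × E) (hV : HasFDerivAt V V' x.2) :
    HasFDerivAt (fun z => newtonMomentum m V z y)
      (-(V'.comp (ContinuousLinearMap.snd ℝ ℝ E)).smulRight (ContinuousLinearMap.fst ℝ ℝ E)) x := by
  have h_potential : HasFDerivAt (fun z : ℝ × E => V z.2)
      (V'.comp (ContinuousLinearMap.snd ℝ ℝ E)) x := hV.comp x hasFDerivAt_snd
  have h_energy := h_potential.const_add (m / 2 * (‖y.2‖ / y.1) ^ 2)
  exact (h_energy.smul_const (ContinuousLinearMap.fst ℝ ℝ E)).const_sub _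

theorem hasDerivAt_newtonMomentum_graph (m : ℝ) (hq : HasDerivAt q (q' t) t)
    (hq' : HasDerivAt q' q'' t) (hV : HasFDerivAt V V' (q t)) (h : ℝ × E) :
    HasDerivAt (fun s => newtonMomentum m V (s, q s) (1, q' s) h)
      (m * ⟪q'', h.2⟫ - (m * ⟪q'', q' t⟫ + V' (q' t)) * h.1) t := by
  have h_momentum : HasDerivAt (fun s => m * ⟪q' s, h.2⟫) (m * ⟪q'', h.2⟫) t := by
    simpa using (hq'.inner ℝ (hasDerivAt_const t h.2)).const_mul m
  have h_energy : HasDerivAt (fun s => m / 2 * ‖q' s‖ ^ 2 + V (q s))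
      (m * ⟪q'', q' t⟫ + V' (q' t)) t := by
    refine ((hq'.norm_sq.const_mul (m / 2)).add (hV.comp_hasDerivAt t hq)).congr_deriv ?_
    rw [real_inner_comm]
    ring
  simpa only [newtonMomentum_apply, div_one] using h_momentum.fun_sub (h_energy.mul_const h.1)

theorem eulerLagrangeCovector_graph
    (hF : ∀ x y : ℝ × E, y.1 ≠ 0 → F (x, y) = newtonFinsler m V x y)
    (hq : ∀ᶠ s in 𝓝 t, HasDerivAt q (q' s) s) (hq' : HasDerivAt q' q'' t)
    (hV : HasFDerivAt V V' (q t)) (h : ℝ × E) :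
    eulerLagrangeCovector F (fun s => (s, q s)) t h =
      -(m * ⟪q'', h.2 - h.1 • q' t⟫ + V' (h.2 - h.1 • q' t)) := by
  have h_velocity : ∀ᶠ s in 𝓝 t, deriv (fun r => (r, q r)) s = ((1 : ℝ), q' s) :=
    hq.mono fun s hs => ((hasDerivAt_id s).prodMk hs).deriv
  have h_position : fderiv ℝ (fun x => fderiv ℝ (fun y => F (x, y)) (1, q' t)) (t, q t) h
      (1, q' t) = -V' h.2 := by
    simp only [fderiv_eq_newtonMomentum hF (y := (1, q' t)) one_ne_zero]
    rw [(hasFDerivAt_newtonMomentum (x := (t, q t)) m (1, q' t) hV).fderiv]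
    simp
  have h_momentum : (fun s => fderiv ℝ (fun y => F ((s, q s), y))
      (deriv (fun r => (r, q r)) s) h) =ᶠ[𝓝 t]
      fun s => newtonMomentum m V (s, q s) (1, q' s) h :=
    h_velocity.mono fun s hs => by
      simp only [hs, fderiv_eq_newtonMomentum hF (y := (1, q' s)) one_ne_zero]
  rw [eulerLagrangeCovector, h_velocity.self_of_nhds, h_position, h_momentum.deriv_eq,
    (hasDerivAt_newtonMomentum_graph m hq.self_of_nhds hq' hV h).deriv]
  simp only [inner_sub_right, real_inner_smul_right, map_sub, map_smul, smul_eq_mul]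
  ring

theorem eulerLagrangeCovector_graph_eq_zero_iff
    (hF : ∀ x y : ℝ × E, y.1 ≠ 0 → F (x, y) = newtonFinsler m V x y)
    (hq : ∀ᶠ s in 𝓝 t, HasDerivAt q (q' s) s) (hq' : HasDerivAt q' q'' t)
    (hV : HasFDerivAt V V' (q t)) :
    (∀ h, eulerLagrangeCovector F (fun s => (s, q s)) t h = 0) ↔
      ∀ w, m * ⟪q'', w⟫ = -V' w := by
  simp only [eulerLagrangeCovector_graph hF hq hq' hV, neg_eq_zero, add_eq_zero_iff_eq_neg]
  exact ⟨fun h_zero w => by simpa using h_zero (0, w), fun h_newton h => h_newton _⟩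

theorem newton_as_finsler_general
    (hF : ∀ x y : ℝ × E, y.1 ≠ 0 → F (x, y) = newtonFinsler m V x y) :
    (∀ l : ℝ, l ≠ 0 → ∀ x y : ℝ × E, y.1 ≠ 0 → F (x, l • y) = l * F (x, y)) ∧
      ∀ (q q' : ℝ → E) (q'' : E) (V' : E →L[ℝ] ℝ) (t : ℝ),
        (∀ᶠ s in 𝓝 t, HasDerivAt q (q' s) s) → HasDerivAt q' q'' t → HasFDerivAt V V' (q t) →
          ((∀ h, eulerLagrangeCovector F (fun s => (s, q s)) t h = 0) ↔
            ∀ w, m * ⟪q'', w⟫ = -V' w) := by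
  refine ⟨fun l hl x y hy => ?_, fun q q' q'' V' t hq hq' hV =>
    eulerLagrangeCovector_graph_eq_zero_iff hF hq hq' hV⟩
  rw [hF x y hy, hF x (l • y) (mul_ne_zero hl hy), newtonFinsler_smul m V x hl hy]

end NewtonFinsler

/-- **Newtonian mechanics as a Finsler system.**  The homogeneous Lagrangian
`F((x⁰,x⃗),(y⁰,y⃗)) = (m/2)‖y⃗‖²/y⁰ − V(x⃗)·y⁰` is positively `1`-homogeneous on `y⁰ ≠ 0`, and
the graph curve `σ(t) = (t, q(t))` satisfies its Euler–Lagrange equations on `[t₁, t₂]` iff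
`q` satisfies Newton's equation `m·q″ = −∇V(q)` there. -/
theorem newton_as_finsler
    (n : ℕ) (hn : 1 ≤ n) (m : ℝ) (hm : 0 < m)
    (V : EuclideanSpace ℝ (Fin n) → ℝ) (hV : ContDiff ℝ 1 V)
    (F : (ℝ × EuclideanSpace ℝ (Fin n)) × (ℝ × EuclideanSpace ℝ (Fin n)) → ℝ)
    (hFdef : ∀ (x y : ℝ × EuclideanSpace ℝ (Fin n)), y.1 ≠ 0 →
      F (x, y) = m / 2 * ‖y.2‖ ^ 2 / y.1 - V x.2 * y.1) :
    (∀ (l : ℝ), 0 < l → ∀ (x y : ℝ × EuclideanSpace ℝ (Fin n)), y.1 ≠ 0 →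
        F (x, l • y) = l * F (x, y))
      ∧ (∀ (q : ℝ → EuclideanSpace ℝ (Fin n)), ContDiff ℝ 2 q →
          ∀ (t₁ t₂ : ℝ), t₁ < t₂ →
            ((∀ t ∈ Set.Icc t₁ t₂, ∀ h : ℝ × EuclideanSpace ℝ (Fin n),
                eulerLagrange n F (fun t => (t, q t)) t h = 0)
              ↔ (∀ t ∈ Set.Icc t₁ t₂, ∀ w : EuclideanSpace ℝ (Fin n),
                  m * ⟪deriv (deriv q) t, w⟫ = -(fderiv ℝ V (q t) w)))) := by
  have ⟨h_homogeneous, h_newton⟩ := newton_as_finsler_general hFdef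
  exact ⟨fun l hl => h_homogeneous l hl.ne', fun q hq _ _ _ => forall₂_congr fun t _ =>
    h_newton q (deriv q) _ _ t
      (.of_forall fun s => (hq.differentiable two_ne_zero s).hasDerivAt)
      (hq.differentiable_deriv_two t).hasDerivAt
      (hV.differentiable one_ne_zero (q t)).hasFDerivAt⟩
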